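/- For k ≥ 1, the number of self-dual Tamari intervals of size 2k equals (1/(3k+1)) · C(4k, k), and for k ≥ 0 the number of self-dual Tamari intervals of size 2k+1 equals (1/(k+1)) · C(4k+2, k). -/

import Mathlib

/-- Binary trees: a leaf or a binary node with two subtrees. -/
inductive BT : Type
  | leaf : BT
  | node : BT → BT → BT

namespace BT

/-- Number of binary (internal) nodes. -/
def size : BT → ℕ
  | leaf => 0
  | node l r => l.size + r.size + 1

/-- One right rotation somewhere in the tree: ((A,B),C) ↦ (A,(B,C)). -/
inductive Rot : BT → BT → Prop
  | rotate (A B C : BT) : Rot (node (node A B) C) (node A (node B C))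
  | left {l l' : BT} (r : BT) : Rot l l' → Rot (node l r) (node l' r)
  | right (l : BT) {r r' : BT} : Rot r r' → Rot (node l r) (node l r')

/-- Tamari order: reflexive-transitive closure of right rotation. -/
def tle (T T' : BT) : Prop := Relation.ReflTransGen Rot T T'

/-- Bracket-vector: sizes of right subtrees of nodes, in infix order. -/
def bracket : BT → List ℕ
  | leaf => []
  | node l r => bracket l ++ r.size :: bracket r

/-- Dual bracket-vector: sizes of left subtrees of nodes, in infix order. -/
def dualBracket : BT → List ℕ
  | leaf => []
  | node l r => dualBracket l ++ l.size :: dualBracket r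

/-- Canopy word: for each leaf (left to right), 1 if it is a left child, 0 if a right child;
the argument `b` is the value assigned to the tree if it is itself a leaf. -/
def canopyAux (b : ℕ) : BT → List ℕ
  | leaf => [b]
  | node l r => canopyAux 1 l ++ canopyAux 0 r

/-- Canopy-vector of a binary tree. -/
def canopy (T : BT) : List ℕ := canopyAux 1 T

/-- Left-right mirror. -/
def mir : BT → BT
  | leaf => leaf
  | node l r => node (mir r) (mir l)

/-- Tamari interval of size n. -/
def interval (p : BT × BT) (n : ℕ) : Prop :=
  p.1.size = n ∧ p.2.size = n ∧ tle p.1 p.2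

/-- Tamari interval (of unspecified size). -/
def isInt (p : BT × BT) : Prop := p.1.size = p.2.size ∧ tle p.1 p.2

/-- The rise operation (T,T') ↦ ((T,ε),(ε,T')). -/
def riseF (p : BT × BT) : BT × BT := (node p.1 leaf, node leaf p.2)

/-- An interval is modern when its rise is again an interval. -/
def modern (p : BT × BT) : Prop := tle (node p.1 leaf) (node leaf p.2)

/-- Infinitely modern: every iterated rise is an interval. -/
def infModern (p : BT × BT) : Prop :=
  ∀ k : ℕ, tle ((riseF^[k] p).1) ((riseF^[k] p).2)

/-- Synchronized: equal canopies. -/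
def synced (p : BT × BT) : Prop := canopy p.1 = canopy p.2

/-- Self-dual: equal to its dual (mir T', mir T). -/
def selfDual (p : BT × BT) : Prop := mir p.2 = p.1 ∧ mir p.1 = p.2

/-- Number of positions where the two canopies agree. -/
def agreeCount (p : BT × BT) : ℕ :=
  ((List.range (p.1.size + 1)).filter
    (fun i => (canopy p.1).getD i 0 == (canopy p.2).getD i 0)).length

/-- Number of canopy positions of joint type (a on top, b on bottom), for an interval (T,T')
with T' the upper tree. -/
def typeCount (a b : ℕ) (p : BT × BT) : ℕ :=
  ((List.range (p.1.size + 1)).filter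
    (fun i => ((canopy p.2).getD i 0 == a) && ((canopy p.1).getD i 0 == b))).length

end BT

/-!
Write `graft Y V` for the tree `Y` with `V` placed at its rightmost leaf. The trees above
`node A R` in the Tamari order are the trees `graft Y (node Z W)` with `A ≤ graft Y Z` and `R ≤ W`.
Hence a nonempty interval is a pair of smaller intervals, the first of which has its upper tree cut
at a place of the right spine. With the length of the spine marked by a catalytic variable `x`, the
generating function `F(x, t)` of the intervals satisfies `F = 1 + x t D F`, where
`D = (x F - F(1, t)) / (x - 1)` accounts for the cut.

A self-dual interval is determined by its upper tree, and such a tree is peeled from the outside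
in: comparing it with its mirror image at the middle node shows that it is a cut interval wrapped
around a smaller self-dual interval, cut in the first half of its nodes, or, in odd size, a single
cut interval. With `t` marking half of the size, this gives an equation for the self-dual intervals
which is linear and whose kernel `x - 1 - x ^ 2 t D` involves the same series `D`.

Let `B = 1 + t B ^ 4`. The quadratic method shows `F(B, t) = B` and `D(B, t) = B ^ 2`, so that the
substitution `x = B` kills the kernel. The self-dual intervals are thus counted by `B` in even size
and by `B ^ 3` in odd size, and Raney's formula gives the coefficients.
-/

open PowerSeries Finset
open scoped Polynomial

/-! ### Grafting, cutting and the Tamari order -/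

namespace BT

@[simp] lemma size_leaf : leaf.size = 0 := rfl

@[simp] lemma size_node (l r : BT) : (node l r).size = l.size + r.size + 1 := rfl

@[simp] lemma mir_node (l r : BT) : mir (node l r) = node (mir r) (mir l) := rfl

@[simp] lemma size_eq_zero {T : BT} : T.size = 0 ↔ T = leaf := by
  cases T <;> simp

@[simp] lemma size_mir (T : BT) : (mir T).size = T.size := by
  induction T with
  | leaf => rfl
  | node l r ihl ihr => simp [ihl, ihr, add_comm]

@[simp] lemma mir_mir (T : BT) : mir (mir T) = T := by
  induction T with
  | leaf => rfl
  | node l r ihl ihr => simp [ihl, ihr]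

lemma mir_injective : Function.Injective mir :=
  Function.LeftInverse.injective mir_mir

lemma finite_setOf_size_le (n : ℕ) : {T : BT | T.size ≤ n}.Finite := by
  induction n with
  | zero => exact (Set.finite_singleton leaf).subset fun T hT => size_eq_zero.1 (Nat.le_zero.1 hT)
  | succ n ih =>
    refine ((Set.finite_singleton leaf).union (Set.Finite.image2 node ih ih)).subset ?_
    rintro (_ | ⟨l, r⟩) hT
    · exact Or.inl rfl
    · simp only [Set.mem_ofPred_eq, size_node] at hT
      exact Or.inr ⟨l, Nat.le_of_lt_succ (by omega), r, Nat.le_of_lt_succ (by omega), rfl⟩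

lemma Rot.size_eq {T T' : BT} (h : Rot T T') : T.size = T'.size := by
  induction h with
  | rotate => simp only [size_node]; omega
  | left _ _ ih => simp [ih]
  | right _ _ ih => simp [ih]

lemma Rot.mir {T T' : BT} (h : Rot T T') : Rot (mir T') (mir T) := by
  induction h with
  | rotate A B C => exact .rotate C.mir B.mir A.mir
  | left r _ ih => exact .right r.mir ih
  | right l _ ih => exact .left l.mir ih

@[refl] lemma tle.refl (T : BT) : tle T T := Relation.ReflTransGen.refl

lemma tle.trans {T T' T'' : BT} (h : tle T T') (h' : tle T' T'') : tle T T'' :=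
  Relation.ReflTransGen.trans h h'

lemma tle.size_eq {T T' : BT} (h : tle T T') : T.size = T'.size := by
  induction h with
  | refl => rfl
  | tail _ h ih => exact ih.trans h.size_eq

lemma tle.mir {T T' : BT} (h : tle T T') : tle (mir T') (mir T) := by
  induction h with
  | refl => rfl
  | tail _ h ih => exact .head h.mir ih

lemma tle_mir_comm {T T' : BT} : tle (mir T) T' ↔ tle (mir T') T :=
  ⟨fun h => by simpa using h.mir, fun h => by simpa using h.mir⟩

lemma tle.node {l l' r r' : BT} (hl : tle l l') (hr : tle r r') : tle (node l r) (node l' r') :=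
  (hl.lift (BT.node · r) fun _ _ h => h.left r).trans (hr.lift (BT.node l') fun _ _ h => h.right l')

/-- The tree obtained from `T` by placing `V` at its rightmost leaf. -/
def graft : BT → BT → BT
  | leaf, V => V
  | node l r, V => node l (graft r V)

/-- The tree obtained from `T` by placing `V` at its leftmost leaf. -/
def graftLeft : BT → BT → BT
  | leaf, V => V
  | node l r, V => node (graftLeft l V) r

@[simp] lemma leaf_graft (V : BT) : graft leaf V = V := rfl

@[simp] lemma node_graft (l r V : BT) : graft (node l r) V = node l (graft r V) := rfl

@[simp] lemma leaf_graftLeft (V : BT) : graftLeft leaf V = V := rfl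

@[simp] lemma node_graftLeft (l r V : BT) :
    graftLeft (node l r) V = node (graftLeft l V) r := rfl

@[simp] lemma size_graft (T V : BT) : (graft T V).size = T.size + V.size := by
  induction T with
  | leaf => simp
  | node l r _ ih => simp only [node_graft, size_node, ih]; omega

@[simp] lemma size_graftLeft (T V : BT) : (graftLeft T V).size = T.size + V.size := by
  induction T with
  | leaf => simp
  | node l r ih _ => simp only [node_graftLeft, size_node, ih]; omega

@[simp] lemma graft_assoc (T U V : BT) : graft (graft T U) V = graft T (graft U V) := by
  induction T with
  | leaf => rfl
  | node l r _ ih => simp [ih]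

@[simp] lemma mir_graft (T V : BT) : mir (graft T V) = graftLeft (mir T) (mir V) := by
  induction T with
  | leaf => rfl
  | node l r _ ih => simp [ih]

lemma graftLeft_assoc (T U V : BT) :
    graftLeft (graftLeft T U) V = graftLeft T (graftLeft U V) := by
  induction T with
  | leaf => rfl
  | node l r ih _ => simp [ih]

lemma node_graft_tle (Y Z W : BT) : tle (node (graft Y Z) W) (graft Y (node Z W)) := by
  induction Y with
  | leaf => rfl
  | node l r _ ih => exact .head (.rotate l (graft r Z) W) ((tle.refl l).node ih)

lemma graftLeft_node_tle (Y Z W : BT) :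
    tle (graftLeft Y (node Z W)) (node Z (graftLeft Y W)) := by
  simpa using (node_graft_tle (mir Y) (mir W) (mir Z)).mir

lemma Rot.of_graft_node {Y Z W X : BT} (h : Rot (graft Y (BT.node Z W)) X) :
    ∃ Y' Z' W', X = graft Y' (BT.node Z' W') ∧ tle (graft Y Z) (graft Y' Z') ∧ tle W W' := by
  induction Y generalizing X with
  | leaf =>
    rcases h with ⟨A, B, _⟩ | ⟨_, hZ⟩ | ⟨_, hW⟩
    · exact ⟨BT.node A leaf, B, W, rfl, .refl _, .refl _⟩
    · exact ⟨leaf, _, W, rfl, .single hZ, .refl _⟩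
    · exact ⟨leaf, Z, _, rfl, .refl _, .single hW⟩
  | node l r _ ih =>
    rcases h with ⟨A, B, _⟩ | ⟨_, hl⟩ | ⟨_, hr⟩
    · exact ⟨BT.node A (BT.node B r), Z, W, rfl, .single (.rotate A B _), .refl _⟩
    · exact ⟨BT.node _ r, Z, W, rfl, .single (hl.left _), .refl _⟩
    · obtain ⟨Y', Z', W', rfl, hYZ, hW⟩ := ih hr
      exact ⟨BT.node l Y', Z', W', rfl, (tle.refl l).node hYZ, hW⟩

lemma tle_node_iff {A R X : BT} :
    tle (node A R) X ↔
      ∃ Y Z W, X = graft Y (node Z W) ∧ tle A (graft Y Z) ∧ tle R W := by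
  constructor
  · intro h
    induction h with
    | refl => exact ⟨leaf, A, R, rfl, .refl _, .refl _⟩
    | tail _ h ih =>
      obtain ⟨Y, Z, W, rfl, hA, hR⟩ := ih
      obtain ⟨Y', Z', W', rfl, hYZ, hW⟩ := h.of_graft_node
      exact ⟨Y', Z', W', rfl, hA.trans hYZ, hR.trans hW⟩
  · rintro ⟨Y, Z, W, rfl, hA, hR⟩
    exact (hA.node hR).trans (node_graft_tle Y Z W)

lemma graft_node_eq_graft_node {P R Q Y Z W : BT}
    (h : graft P (node R Q) = graft Y (node Z W)) :
    (P = Y ∧ R = Z ∧ Q = W) ∨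
      (∃ V, Y = graft P (node R V) ∧ Q = graft V (node Z W)) ∨
      (∃ V, P = graft Y (node Z V) ∧ W = graft V (node R Q)) := by
  induction P generalizing Y with
  | leaf =>
    cases Y with
    | leaf => exact Or.inl (by simpa using h)
    | node l r =>
      obtain ⟨rfl, rfl⟩ : R = l ∧ Q = graft r (node Z W) := by simpa using h
      exact Or.inr (Or.inl ⟨r, rfl, rfl⟩)
  | node l r _ ih =>
    cases Y with
    | leaf =>
      obtain ⟨rfl, rfl⟩ : l = Z ∧ graft r (node R Q) = W := by simpa using h
      exact Or.inr (Or.inr ⟨r, rfl, rfl⟩)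
    | node l' r' =>
      obtain ⟨rfl, hr⟩ : l = l' ∧ graft r (node R Q) = graft r' (node Z W) := by simpa using h
      obtain ⟨rfl, rfl, rfl⟩ | ⟨V, rfl, rfl⟩ | ⟨V, rfl, rfl⟩ := ih hr
      · exact Or.inl ⟨rfl, rfl, rfl⟩
      · exact Or.inr (Or.inl ⟨V, rfl, rfl⟩)
      · exact Or.inr (Or.inr ⟨V, rfl, rfl⟩)

lemma graft_node_unique {P R Q Y Z W : BT} {c : ℕ}
    (h : graft P (node R Q) = graft Y (node Z W))
    (hP : P.size ≤ c) (hR : c ≤ P.size + R.size) (hY : Y.size ≤ c) (hZ : c ≤ Y.size + Z.size) :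
    P = Y ∧ R = Z ∧ Q = W := by
  obtain h | ⟨V, rfl, -⟩ | ⟨V, rfl, -⟩ := graft_node_eq_graft_node h
  · exact h
  all_goals simp only [size_graft, size_node] at hP hY; omega

lemma exists_graft_node {T : BT} {c : ℕ} (hc : c < T.size) :
    ∃ P R Q, T = graft P (node R Q) ∧ P.size ≤ c ∧ c ≤ P.size + R.size := by
  induction T generalizing c with
  | leaf => simp at hc
  | node l r _ ih =>
    obtain hl | hl := le_or_gt c l.size
    · exact ⟨leaf, l, r, rfl, by simp, by simpa using hl⟩
    · obtain ⟨P, R, Q, rfl, hP, hR⟩ := ih (c := c - l.size - 1) (by rw [size_node] at hc; omega)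
      exact ⟨node l P, R, Q, rfl, by simp only [size_node]; omega, by simp only [size_node]; omega⟩

lemma tle_graft_node_iff {P' Q' R' P R Q : BT} (hsize : Q'.size = P.size + R.size) :
    tle (graftLeft P' (node Q' R')) (graft P (node R Q)) ↔
      tle Q' (graft P R) ∧ tle (graftLeft P' R') Q := by
  constructor
  · intro h
    induction P' generalizing Q with
    | leaf =>
      obtain ⟨Y, Z, W, hX, hQ', hR'⟩ := tle_node_iff.1 h
      have hYZ : Q'.size = Y.size + Z.size := by simpa using hQ'.size_eq
      obtain ⟨rfl, rfl, rfl⟩ := graft_node_unique (c := Q'.size) hX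
        (by omega) (by omega) (by omega) (by omega)
      exact ⟨hQ', hR'⟩
    | node l r ih _ =>
      obtain ⟨Y, Z, W, hX, hl, hr⟩ := tle_node_iff.1 h
      have hYZ := hl.size_eq
      simp only [size_graft, size_graftLeft, size_node] at hYZ
      obtain ⟨rfl, rfl, rfl⟩ | ⟨V, rfl, rfl⟩ | ⟨V, rfl, -⟩ := graft_node_eq_graft_node hX
      · omega
      · obtain ⟨hQ', hR'⟩ := ih (Q := graft V Z) (by simpa using hl)
        exact ⟨hQ', (hR'.node hr).trans (node_graft_tle V Z W)⟩
      · simp only [size_graft, size_node] at hsize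
        omega
  · rintro ⟨hQ', hR'⟩
    exact ((graftLeft_node_tle P' Q' R').trans (hQ'.node hR')).trans (node_graft_tle P R Q)

lemma tle.size_le_of_graft_node {P' Q' R' Y Z W : BT}
    (h : tle (graftLeft P' (BT.node Q' R')) (graft Y (BT.node Z W)))
    (hY : Y.size ≤ Q'.size) (hZ : Q'.size < Y.size + Z.size) :
    Q'.size + R'.size + 1 ≤ Y.size + Z.size := by
  induction P' generalizing W with
  | leaf =>
    obtain ⟨Y₁, Z₁, W₁, hX, hQ', -⟩ := tle_node_iff.1 h
    have hYZ : Q'.size = Y₁.size + Z₁.size := by simpa using hQ'.size_eq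
    obtain ⟨rfl, rfl, rfl⟩ := graft_node_unique (c := Q'.size) hX hY hZ.le (by omega) hYZ.le
    omega
  | node l r ih _ =>
    obtain ⟨Y₁, Z₁, W₁, hX, hl, -⟩ := tle_node_iff.1 h
    have hYZ := hl.size_eq
    simp only [size_graft, size_graftLeft, size_node] at hYZ
    obtain ⟨rfl, rfl, rfl⟩ | ⟨V, rfl, -⟩ | ⟨V, rfl, -⟩ := graft_node_eq_graft_node hX
    · omega
    · exact ih (W := graft V Z₁) (by simpa using hl)
    · simp only [size_graft, size_node] at hY
      omega

/-- `T` is the upper end of a self-dual interval, whose lower end is then `mir T`. -/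
def IsSelfDualTop (T : BT) : Prop := tle (mir T) T

lemma isSelfDualTop_graft_node_iff {P R Q : BT} (hsize : Q.size = P.size + R.size) :
    IsSelfDualTop (graft P (node R Q)) ↔ tle (mir Q) (graft P R) := by
  have hsize' : (mir Q).size = P.size + R.size := by simpa using hsize
  rw [IsSelfDualTop, mir_graft, mir_node, tle_graft_node_iff hsize', ← mir_graft,
    tle_mir_comm (T := graft P R), and_self]

lemma isSelfDualTop_graft_graft_iff {Y Z S R Q : BT} (hsize : Q.size = Y.size + Z.size) :
    IsSelfDualTop (graft Y (node Z (graft S (node R Q)))) ↔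
      tle (mir Q) (graft Y Z) ∧ IsSelfDualTop (graft S R) := by
  have houter : (mir Q).size = Y.size + Z.size := by simpa using hsize
  have hinner : (mir (graft S R)).size = S.size + R.size := by simp
  have hmir : mir (graft Y (node Z (graft S (node R Q)))) =
      graftLeft (graftLeft (mir Y) (node (mir S) (mir Z))) (node (mir Q) (mir R)) := by
    simp [graftLeft_assoc]
  have hrest : graftLeft (graftLeft (mir Y) (node (mir S) (mir Z))) (mir R) =
      graftLeft (mir Y) (node (mir (graft S R)) (mir Z)) := by
    simp [graftLeft_assoc]
  rw [IsSelfDualTop, hmir, tle_graft_node_iff houter, hrest, tle_graft_node_iff hinner,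
    ← mir_graft, tle_mir_comm (T := graft Y Z), and_comm (a := tle (mir (graft S R)) _),
    and_self_left, IsSelfDualTop]

lemma IsSelfDualTop.exists_eq_graft {P R Q : BT} (h : IsSelfDualTop (graft P (node R Q)))
    (hP : P.size ≤ R.size + Q.size + 1) (hQ : Q.size < P.size + R.size) :
    ∃ Y Z S, P = graft Y (node Z S) ∧ Q.size = Y.size + Z.size := by
  rw [IsSelfDualTop, mir_graft, mir_node] at h
  have hPQ : Q.size < P.size := by
    by_contra! hle
    have := h.size_le_of_graft_node (by simpa using hle) (by simpa using hQ)
    simp only [size_mir] at this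
    omega
  obtain ⟨Y, Z, S, rfl, hY, hZ⟩ := exists_graft_node hPQ
  refine ⟨Y, Z, S, rfl, hZ.eq_or_lt.resolve_right fun hlt => ?_⟩
  rw [graft_assoc, node_graft] at h
  have := h.size_le_of_graft_node (by simpa using hY) (by simpa using hlt)
  simp only [size_mir, size_graft, size_node] at this hP
  omega

lemma IsSelfDualTop.exists_decomposition {T : BT} (h : IsSelfDualTop T) (hT : T ≠ leaf) :
    (∃ Y Z Q, T = graft Y (node Z Q) ∧ tle (mir Q) (graft Y Z)) ∨
      ∃ Y Z S R Q, T = graft Y (node Z (graft S (node R Q))) ∧ tle (mir Q) (graft Y Z) ∧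
        IsSelfDualTop (graft S R) ∧ S.size ≤ R.size := by
  have hpos : T.size ≠ 0 := mt size_eq_zero.1 hT
  obtain ⟨P, R, Q, rfl, hP, hR⟩ := exists_graft_node (T := T) (c := T.size / 2) (by omega)
  simp only [size_graft, size_node] at hP hR hpos
  obtain hQ | hQ : Q.size = P.size + R.size ∨ Q.size < P.size + R.size := by omega
  · exact Or.inl ⟨P, R, Q, rfl, (isSelfDualTop_graft_node_iff hQ).1 h⟩
  · obtain ⟨Y, Z, S, rfl, hYZ⟩ := h.exists_eq_graft (by omega) hQ
    rw [graft_assoc, node_graft] at h ⊢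
    obtain ⟨houter, hinner⟩ := (isSelfDualTop_graft_graft_iff hYZ).1 h
    simp only [size_graft, size_node] at hP
    exact Or.inr ⟨Y, Z, S, R, Q, rfl, houter, hinner, by omega⟩

/-- The number of nodes on the right spine, that is the path from the root to the rightmost
leaf. -/
def spine : BT → ℕ
  | leaf => 0
  | node _ r => r.spine + 1

/-- The number of nodes on the right spine among the first `c` nodes in infix order. -/
def spineBelow (c : ℕ) : BT → ℕ
  | leaf => 0
  | node l r => if l.size < c then spineBelow (c - l.size - 1) r + 1 else 0

@[simp] lemma spine_leaf : spine leaf = 0 := rfl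

@[simp] lemma spine_node (l r : BT) : spine (node l r) = spine r + 1 := rfl

@[simp] lemma spine_graft (T V : BT) : spine (graft T V) = spine T + spine V := by
  induction T with
  | leaf => simp
  | node l r _ ih => simp only [node_graft, spine_node, ih]; omega

@[simp] lemma spineBelow_leaf (c : ℕ) : spineBelow c leaf = 0 := rfl

lemma spineBelow_node (c : ℕ) (l r : BT) :
    spineBelow c (node l r) = if l.size < c then spineBelow (c - l.size - 1) r + 1 else 0 := rfl

lemma spineBelow_le_spine (c : ℕ) (T : BT) : spineBelow c T ≤ spine T := by
  induction T generalizing c with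
  | leaf => simp
  | node l r _ ih =>
    rw [spineBelow_node, spine_node]
    split_ifs
    · exact Nat.succ_le_succ (ih _)
    · exact Nat.zero_le _

lemma spineBelow_graft_of_size_le {Y : BT} {c : ℕ} (hY : Y.size ≤ c) (Z : BT) :
    spineBelow c (graft Y Z) = spine Y + spineBelow (c - Y.size) Z := by
  induction Y generalizing c with
  | leaf => simp
  | node l r _ ih =>
    rw [size_node] at hY
    rw [node_graft, spineBelow_node, if_pos (by omega), ih (by omega), spine_node, size_node,
      show c - l.size - 1 - r.size = c - (l.size + r.size + 1) by omega]
    omega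

lemma spineBelow_graft_lt {Y : BT} {c : ℕ} (hY : c < Y.size) (Z : BT) :
    spineBelow c (graft Y Z) < spine Y := by
  induction Y generalizing c with
  | leaf => simp at hY
  | node l r _ ih =>
    rw [size_node] at hY
    rw [node_graft, spineBelow_node, spine_node]
    split_ifs
    · exact Nat.succ_lt_succ (ih (by omega))
    · exact Nat.succ_pos _

lemma size_le_iff_spine_le_spineBelow {c : ℕ} (Y Z : BT) :
    Y.size ≤ c ↔ spine Y ≤ spineBelow c (graft Y Z) := by
  refine ⟨fun h => ?_, fun h => ?_⟩
  · exact (spineBelow_graft_of_size_le h Z).symm ▸ Nat.le_add_right _ _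
  · by_contra! hlt
    exact h.not_gt (spineBelow_graft_lt hlt Z)

lemma spineBelow_graft_node {P R Q : BT} {c : ℕ} (hP : P.size ≤ c) (hR : c ≤ P.size + R.size) :
    spineBelow c (graft P (node R Q)) = spine P := by
  rw [spineBelow_graft_of_size_le hP, spineBelow_node, if_neg (by omega), add_zero]

lemma graft_inj_of_spine_eq {S R S' R' : BT} (h : graft S R = graft S' R')
    (hspine : spine S = spine S') : S = S' ∧ R = R' := by
  induction S generalizing S' with
  | leaf =>
    cases S' with
    | leaf => exact ⟨rfl, h⟩
    | node => simp at hspine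
  | node l r _ ih =>
    cases S' with
    | leaf => simp at hspine
    | node l' r' =>
      obtain ⟨rfl, hr⟩ : l = l' ∧ graft r R = graft r' R' := by simpa using h
      obtain ⟨rfl, rfl⟩ := ih hr (by simpa using hspine)
      exact ⟨rfl, rfl⟩

lemma exists_graft_of_le_spine {T : BT} {i : ℕ} (hi : i ≤ spine T) :
    ∃ S R, T = graft S R ∧ spine S = i := by
  induction T generalizing i with
  | leaf => exact ⟨leaf, leaf, rfl, (Nat.le_zero.1 hi).symm⟩
  | node l r _ ih =>
    cases i with
    | zero => exact ⟨leaf, _, rfl, rfl⟩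
    | succ i =>
      obtain ⟨S, R, rfl, rfl⟩ := ih (Nat.le_of_succ_le_succ hi)
      exact ⟨node l S, R, rfl, rfl⟩

end BT

/-! ### Generating functions of combinatorial classes -/

section SymbolicMethod

variable {α β A : Type*}

/-- The finiteness condition for the combinatorial class `s` with size function `size` to be
counted: it has finitely many elements of each size. -/
def FiniteFibers (s : Set α) (size : α → ℕ) : Prop :=
  ∀ n, {a ∈ s | size a = n}.Finite

/-- The generating function `∑ w(a) t ^ size(a)`, over the elements `a` of the combinatorial class
`s`, with weights `w`. Its coefficients have the junk value `0` where infinitely many elements of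
the same size have a nonzero weight. -/
noncomputable def genFun [Semiring A] (s : Set α) (size : α → ℕ) (w : α → A) : A⟦X⟧ :=
  .mk fun n => ∑ᶠ a ∈ {a ∈ s | size a = n}, w a

section Semiring

variable [Semiring A] {s t : Set α} {size : α → ℕ} {w : α → A}

lemma coeff_genFun (n : ℕ) :
    coeff n (genFun s size w) = ∑ᶠ a ∈ {a ∈ s | size a = n}, w a :=
  coeff_mk _ _

lemma FiniteFibers.coeff_genFun_eq_sum (hs : FiniteFibers s size) (n : ℕ) :
    coeff n (genFun s size w) = ∑ a ∈ (hs n).toFinset, w a := by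
  rw [coeff_genFun, finsum_mem_eq_finite_toFinset_sum _ (hs n)]

lemma genFun_congr {size' : α → ℕ} {w' : α → A} (hsize : ∀ a ∈ s, size a = size' a)
    (hw : ∀ a ∈ s, w a = w' a) : genFun s size w = genFun s size' w' := by
  ext n
  rw [coeff_genFun, coeff_genFun]
  refine finsum_mem_congr (Set.ext fun a => and_congr_right fun ha => ?_) fun a ha => hw a ha.1
  rw [hsize a ha]

lemma genFun_of_bijOn {t : Set β} {size : β → ℕ} {w : β → A} {e : α → β}
    (he : Set.BijOn e s t) : genFun t size w = genFun s (fun a => size (e a)) fun a => w (e a) := by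
  ext n
  rw [coeff_genFun, coeff_genFun]
  have hfiber : Set.BijOn e {a ∈ s | size (e a) = n} {b ∈ t | size b = n} := by
    refine ⟨fun a ha => ⟨he.mapsTo ha.1, ha.2⟩, he.injOn.mono fun a ha => ha.1, fun b hb => ?_⟩
    obtain ⟨a, ha, rfl⟩ := he.surjOn hb.1
    exact ⟨a, ⟨ha, hb.2⟩, rfl⟩
  exact (finsum_mem_eq_of_bijOn e hfiber fun _ _ => rfl).symm

lemma genFun_union (hst : Disjoint s t) (hfin : FiniteFibers (s ∪ t) size) :
    genFun (s ∪ t) size w = genFun s size w + genFun t size w := by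
  ext n
  rw [map_add, coeff_genFun, coeff_genFun, coeff_genFun, ← finsum_mem_union]
  · exact finsum_mem_congr (Set.ext fun a => or_and_right) fun _ _ => rfl
  · exact hst.mono (fun a ha => ha.1) fun a ha => ha.1
  · exact (hfin n).subset fun a ha => ⟨Or.inl ha.1, ha.2⟩
  · exact (hfin n).subset fun a ha => ⟨Or.inr ha.1, ha.2⟩

lemma genFun_singleton (a : α) : genFun {a} size w = monomial (size a) (w a) := by
  ext n
  rw [coeff_genFun, coeff_monomial]
  split_ifs with h
  · rw [Set.sep_eq_self_iff_mem_true.2 fun b hb => by rw [Set.mem_singleton_iff.1 hb, h],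
      finsum_mem_singleton]
  · rw [Set.sep_eq_empty_iff_mem_false.2 fun b hb => by
      rw [Set.mem_singleton_iff.1 hb]; exact Ne.symm h, finsum_mem_empty]

lemma genFun_size_succ : genFun s (fun a => size a + 1) w = X * genFun s size w := by
  ext (_ | n)
  · simp [coeff_genFun]
  · simp [coeff_genFun, coeff_succ_X_mul]

lemma FiniteFibers.map_genFun {B : Type*} [Semiring B] (hs : FiniteFibers s size) (f : A →+* B) :
    PowerSeries.map f (genFun s size w) = genFun s size fun a => f (w a) := by
  ext n
  simp [hs.coeff_genFun_eq_sum]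

lemma FiniteFibers.genFun_const_mul (hs : FiniteFibers s size) (c : A) :
    genFun s size (fun a => c * w a) = C c * genFun s size w := by
  ext n
  simp only [hs.coeff_genFun_eq_sum, coeff_C_mul, mul_sum]

lemma FiniteFibers.coeff_genFun_one (hs : FiniteFibers s size) (n : ℕ) :
    coeff n (genFun s size fun _ => (1 : A)) = {a ∈ s | size a = n}.ncard := by
  rw [hs.coeff_genFun_eq_sum, sum_const, nsmul_one, Set.ncard_eq_toFinset_card _ (hs n)]

end Semiring

lemma FiniteFibers.prod {s : Set α} {t : Set β} {a : α → ℕ} {b : β → ℕ}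
    (hs : FiniteFibers s a) (ht : FiniteFibers t b) :
    FiniteFibers (s ×ˢ t) fun p => a p.1 + b p.2 := by
  intro n
  refine ((antidiagonal n).finite_toSet.biUnion fun q _ => (hs q.1).prod (ht q.2)).subset ?_
  rintro p ⟨⟨hp₁, hp₂⟩, hn⟩
  exact Set.mem_biUnion (x := (a p.1, b p.2)) (HasAntidiagonal.mem_antidiagonal.2 hn)
    ⟨⟨hp₁, rfl⟩, hp₂, rfl⟩

lemma FiniteFibers.genFun_prod [CommSemiring A] {s : Set α} {t : Set β} {a : α → ℕ} {b : β → ℕ}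
    {v : α → A} {w : β → A} (hs : FiniteFibers s a) (ht : FiniteFibers t b) :
    genFun (s ×ˢ t) (fun p => a p.1 + b p.2) (fun p => v p.1 * w p.2) =
      genFun s a v * genFun t b w := by
  ext n
  simp only [(hs.prod ht).coeff_genFun_eq_sum, coeff_mul, hs.coeff_genFun_eq_sum,
    ht.coeff_genFun_eq_sum, sum_mul_sum, ← sum_product']
  rw [sum_sigma']
  refine sum_nbij' (fun p => ⟨(a p.1, b p.2), p⟩) Sigma.snd ?_ ?_ ?_ ?_ ?_
  · rintro p hp
    simp only [Set.Finite.mem_toFinset, Set.mem_ofPred_eq, Set.mem_prod] at hp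
    simpa [hp.1] using hp.2
  · rintro ⟨q, p⟩ hp
    simp only [mem_sigma, HasAntidiagonal.mem_antidiagonal, mem_product, Set.Finite.mem_toFinset,
      Set.mem_ofPred_eq] at hp
    obtain ⟨hn, ⟨hs', ha⟩, ht', hb⟩ := hp
    simp [hs', ht', ha, hb, hn]
  · exact fun _ _ => rfl
  · rintro ⟨q, p⟩ hp
    simp only [mem_sigma, HasAntidiagonal.mem_antidiagonal, mem_product, Set.Finite.mem_toFinset,
      Set.mem_ofPred_eq] at hp
    simp [hp.2.1.2, hp.2.2.2]
  · exact fun _ _ => rfl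

lemma FiniteFibers.genFun_prod_succ [CommSemiring A] {s : Set α} {t : Set β} {a : α → ℕ}
    {b : β → ℕ} {v : α → A} {w : β → A} (hs : FiniteFibers s a) (ht : FiniteFibers t b) (x : A) :
    genFun (s ×ˢ t) (fun p => a p.1 + b p.2 + 1) (fun p => x * (v p.1 * w p.2)) =
      X * C x * genFun s a v * genFun t b w := by
  rw [genFun_size_succ, (hs.prod ht).genFun_const_mul, hs.genFun_prod ht]
  simp only [mul_assoc]

lemma FiniteFibers.mark {s : Set α} {size : α → ℕ} (hs : FiniteFibers s size) (f : α → ℕ) :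
    FiniteFibers {p : α × ℕ | p.1 ∈ s ∧ p.2 ≤ f p.1} fun p => size p.1 := by
  intro n
  refine ((hs n).biUnion fun a _ => (Set.finite_Iic (f a)).image (Prod.mk a)).subset ?_
  rintro ⟨a, i⟩ ⟨⟨ha, hi⟩, hn⟩
  exact Set.mem_biUnion ⟨ha, hn⟩ ⟨i, hi, rfl⟩

lemma FiniteFibers.sub_one_mul_genFun_mark [CommRing A] {s : Set α} {size f : α → ℕ}
    (hs : FiniteFibers s size) (x : A) :
    (C x - 1) * genFun {p : α × ℕ | p.1 ∈ s ∧ p.2 ≤ f p.1} (fun p => size p.1) (fun p => x ^ p.2) =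
      C x * genFun s size (fun a => x ^ f a) - genFun s size fun _ => 1 := by
  ext n
  have hsum : ∑ p ∈ (hs.mark f n).toFinset, x ^ p.2 =
      ∑ a ∈ (hs n).toFinset, ∑ i ∈ range (f a + 1), x ^ i :=
    sum_finset_product _ _ _ fun p => by
      simp only [Set.Finite.mem_toFinset, Set.mem_ofPred_eq, mem_range, Nat.lt_succ_iff,
        and_right_comm]
  rw [sub_mul, one_mul, map_sub, map_sub, coeff_C_mul, coeff_C_mul, (hs.mark f).coeff_genFun_eq_sum,
    hs.coeff_genFun_eq_sum, hs.coeff_genFun_eq_sum, hsum, ← sub_one_mul, mul_sum, mul_sum,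
    ← sum_sub_distrib]
  refine sum_congr rfl fun a _ => ?_
  rw [mul_geom_sum, pow_succ']

end SymbolicMethod

/-! ### Power series with a catalytic variable -/

section Series

variable {R : Type*} [CommRing R]

lemma exists_eq_of_contracting (f : R⟦X⟧ → R⟦X⟧)
    (hf : ∀ n u v, (X : R⟦X⟧) ^ n ∣ u - v → (X : R⟦X⟧) ^ (n + 1) ∣ f u - f v) :
    ∃ B, B = f B := by
  have hiterate (n j : ℕ) : (X : R⟦X⟧) ^ n ∣ f^[n + j] 0 - f^[n] 0 := by
    induction n with
    | zero => simp
    | succ n ih =>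
      rw [Nat.add_right_comm, Function.iterate_succ_apply', Function.iterate_succ_apply']
      exact hf _ _ _ ih
  have hcoeff {m n : ℕ} (hmn : m < n) : coeff m (f^[n] 0) = coeff m (f^[m + 1] 0) := by
    obtain ⟨j, rfl⟩ := Nat.exists_eq_add_of_lt hmn
    have := X_pow_dvd_iff.1 (hiterate (m + 1) j) m m.lt_succ_self
    rwa [map_sub, sub_eq_zero, Nat.add_right_comm] at this
  let B : R⟦X⟧ := PowerSeries.mk fun n => coeff n (f^[n + 1] 0)
  have hB (n : ℕ) : (X : R⟦X⟧) ^ n ∣ B - f^[n] 0 := by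
    refine X_pow_dvd_iff.2 fun m hm => ?_
    rw [map_sub, coeff_mk, hcoeff hm, sub_self]
  refine ⟨B, PowerSeries.ext fun n => ?_⟩
  have hfB := X_pow_dvd_iff.1 (hf n _ _ (hB n)) n n.lt_succ_self
  rw [← Function.iterate_succ_apply' f, map_sub, sub_eq_zero] at hfB
  rw [hfB, coeff_mk]

lemma sum_antidiagonal_interchange {M : Type*} [AddCommMonoid M] (n : ℕ)
    (f : ℕ → ℕ → ℕ → ℕ → M) :
    ∑ p ∈ antidiagonal n, ∑ q ∈ antidiagonal p.1, ∑ r ∈ antidiagonal p.2, f q.1 q.2 r.1 r.2 =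
      ∑ p ∈ antidiagonal n, ∑ q ∈ antidiagonal p.1, ∑ r ∈ antidiagonal p.2,
        f q.1 r.1 q.2 r.2 := by
  let swap (x : (_ : ℕ × ℕ) × (_ : ℕ × ℕ) × ℕ × ℕ) : (_ : ℕ × ℕ) × (_ : ℕ × ℕ) × ℕ × ℕ :=
    ⟨(x.2.1.1 + x.2.2.1, x.2.1.2 + x.2.2.2), (x.2.1.1, x.2.2.1), (x.2.1.2, x.2.2.2)⟩
  simp only [sum_sigma']
  refine sum_nbij' swap swap ?_ ?_ ?_ ?_ fun _ _ => rfl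
  all_goals
    rintro ⟨⟨i, j⟩, ⟨a, b⟩, ⟨c, d⟩⟩ hx
    simp only [mem_sigma, HasAntidiagonal.mem_antidiagonal] at hx
    obtain ⟨rfl, rfl, rfl⟩ := hx
  · simp only [mem_sigma, HasAntidiagonal.mem_antidiagonal, swap, and_self, and_true]
    omega
  · simp only [mem_sigma, HasAntidiagonal.mem_antidiagonal, swap, and_self, and_true]
    omega
  · rfl
  · rfl

/-- The diagonal substitution `g(s, t) ↦ g(t, t)` for power series in two variables. -/
noncomputable def diagonal : R⟦X⟧⟦X⟧ →+* R⟦X⟧ where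
  toFun g := .mk fun n => ∑ p ∈ antidiagonal n, coeff p.2 (coeff p.1 g)
  map_zero' := by ext; simp
  map_one' := by
    ext (_ | n)
    · simp
    · simp [Nat.sum_antidiagonal_succ, coeff_one]
  map_add' f g := by ext; simp [sum_add_distrib]
  map_mul' f g := by
    ext n
    simp only [coeff_mk, coeff_mul, map_sum, sum_mul_sum]
    exact sum_antidiagonal_interchange n fun i i' j j' =>
      coeff j (coeff i f) * coeff j' (coeff i' g)

lemma coeff_diagonal (n : ℕ) (g : R⟦X⟧⟦X⟧) :
    coeff n (diagonal g) = ∑ p ∈ antidiagonal n, coeff p.2 (coeff p.1 g) := by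
  simp [diagonal]

@[simp] lemma diagonal_C (g : R⟦X⟧) : diagonal (C g) = g := by
  ext (_ | n)
  · simp [coeff_diagonal]
  · simp [coeff_diagonal, Nat.sum_antidiagonal_succ, coeff_C]

@[simp] lemma diagonal_X : diagonal (X : R⟦X⟧⟦X⟧) = X := by
  ext (_ | n)
  · simp [coeff_diagonal]
  · have hone := congrArg (coeff n) (map_one (diagonal (R := R)))
    rw [coeff_diagonal] at hone
    simpa [coeff_diagonal, Nat.sum_antidiagonal_succ, coeff_X, coeff_one] using hone

@[simp] lemma diagonal_map_C (g : R⟦X⟧) : diagonal (PowerSeries.map C g) = g := by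
  ext (_ | n)
  · simp [coeff_diagonal]
  · simp [coeff_diagonal, Nat.sum_antidiagonal_succ', coeff_C]

/-- The substitution `f(x, t) ↦ f(u(t), t)` of a power series `u` for the catalytic variable `x`
of a power series in `t` whose coefficients are polynomials in `x`. -/
noncomputable def specialize (u : R⟦X⟧) : R[X]⟦X⟧ →+* R⟦X⟧ :=
  diagonal.comp (PowerSeries.map (Polynomial.aeval u : R[X] →ₐ[R] R⟦X⟧).toRingHom)

@[simp] lemma specialize_C (u : R⟦X⟧) (p : R[X]) : specialize u (C p) = Polynomial.aeval u p := by
  simp [specialize]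

@[simp] lemma specialize_X (u : R⟦X⟧) : specialize u (X : R[X]⟦X⟧) = X := by
  simp [specialize]

@[simp] lemma specialize_map_C (u g : R⟦X⟧) :
    specialize u (PowerSeries.map Polynomial.C g) = g := by
  rw [specialize, RingHom.comp_apply, ← RingHom.comp_apply (PowerSeries.map _),
    ← PowerSeries.map_comp]
  convert diagonal_map_C g
  ext r
  simp

lemma X_pow_dvd_specialize_sub {n : ℕ} {u v : R⟦X⟧} (h : X ^ n ∣ u - v) (f : R[X]⟦X⟧) :
    X ^ n ∣ specialize u f - specialize v f := by
  refine X_pow_dvd_iff.2 fun m hm => ?_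
  simp only [specialize, RingHom.comp_apply, map_sub, coeff_diagonal, ← sum_sub_distrib,
    PowerSeries.coeff_map]
  refine sum_eq_zero fun p hp => ?_
  have hdvd : u - v ∣ Polynomial.aeval u (coeff p.1 f) - Polynomial.aeval v (coeff p.1 f) := by
    simpa only [Polynomial.eval_map_algebraMap] using
      Polynomial.sub_dvd_eval_sub u v ((coeff p.1 f).map (algebraMap R R⟦X⟧))
  simpa using X_pow_dvd_iff.1 (h.trans hdvd) p.2
    ((HasAntidiagonal.antidiagonal.snd_le hp).trans_lt hm)

/-- The partial derivative, with respect to the catalytic variable, of a power series with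
polynomial coefficients. -/
noncomputable def catalyticDeriv (f : R[X]⟦X⟧) : R[X]⟦X⟧ :=
  .mk fun n => (coeff n f).derivative

lemma coeff_catalyticDeriv (n : ℕ) (f : R[X]⟦X⟧) :
    coeff n (catalyticDeriv f) = (coeff n f).derivative :=
  coeff_mk _ _

@[simp] lemma catalyticDeriv_sub (f g : R[X]⟦X⟧) :
    catalyticDeriv (f - g) = catalyticDeriv f - catalyticDeriv g := by
  ext1 n
  simp [coeff_catalyticDeriv]

@[simp] lemma catalyticDeriv_mul (f g : R[X]⟦X⟧) :
    catalyticDeriv (f * g) = catalyticDeriv f * g + f * catalyticDeriv g := by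
  ext1 n
  simp only [coeff_catalyticDeriv, coeff_mul, Polynomial.derivative_sum, Polynomial.derivative_mul,
    sum_add_distrib, map_add]

@[simp] lemma catalyticDeriv_C (p : R[X]) :
    catalyticDeriv (C p) = C p.derivative := by
  ext1 n
  rw [coeff_catalyticDeriv, coeff_C, coeff_C]
  split_ifs <;> simp

@[simp] lemma catalyticDeriv_one : catalyticDeriv (1 : R[X]⟦X⟧) = 0 := by
  simpa using catalyticDeriv_C (1 : R[X])

@[simp] lemma catalyticDeriv_X : catalyticDeriv (X : R[X]⟦X⟧) = 0 := by
  ext1 n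
  simp [coeff_catalyticDeriv, coeff_X, apply_ite]

@[simp] lemma catalyticDeriv_map_C (g : R⟦X⟧) :
    catalyticDeriv (PowerSeries.map Polynomial.C g) = 0 := by
  ext1 n
  simp [coeff_catalyticDeriv]

lemma exists_catalytic_root {F D : R[X]⟦X⟧} {F₁ : R⟦X⟧}
    (hF : F = 1 + X * C Polynomial.X * D * F)
    (hD : (C Polynomial.X - 1) * D = C Polynomial.X * F - PowerSeries.map Polynomial.C F₁) :
    ∃ B, B = 1 + X * B ^ 4 ∧ specialize B D = B ^ 2 := by
  -- `B` is chosen so that at `x = B` the derivative of `hquad` with respect to `F` vanishes.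
  obtain ⟨B, hB⟩ := exists_eq_of_contracting
    (fun u => 1 + X * (2 * u ^ 2 * specialize u F - u * F₁)) fun n u v h => by
      obtain ⟨w, hw⟩ := h
      obtain ⟨z, hz⟩ := X_pow_dvd_specialize_sub ⟨w, hw⟩ F
      refine ⟨2 * (u + v) * w * specialize u F + 2 * v ^ 2 * z - w * F₁, ?_⟩
      linear_combination 2 * X * v ^ 2 * hz + X * (2 * (u + v) * specialize u F - F₁) * hw
  have hquad : (C Polynomial.X - 1) * (F - 1) =
      X * C Polynomial.X * (C Polynomial.X * F - PowerSeries.map Polynomial.C F₁) * F := by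
    linear_combination (C Polynomial.X - 1) * hF + X * C Polynomial.X * F * hD
  have hquadB := congrArg (specialize B) hquad
  have hderivB := congrArg (fun f => specialize B (catalyticDeriv f)) hquad
  have hFB := congrArg (specialize B) hF
  simp only [map_mul, map_sub, map_add, map_one, map_zero, specialize_C, specialize_X,
    specialize_map_C, Polynomial.aeval_X, catalyticDeriv_mul, catalyticDeriv_sub,
    catalyticDeriv_one, catalyticDeriv_C, catalyticDeriv_X, catalyticDeriv_map_C,
    Polynomial.derivative_X] at hquadB hderivB hFB
  have hf : specialize B F = B := by
    linear_combination B * hderivB - (specialize B F + B * specialize B (catalyticDeriv F)) * hB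
  have hroot : B = 1 + X * B ^ 4 := by
    rw [hf] at hquadB hB
    linear_combination hB * B - hquadB
  have hunit : IsUnit (B ^ 2) :=
    (IsUnit.of_mul_eq_one (1 - X * B ^ 3) (by linear_combination hroot)).pow 2
  refine ⟨B, hroot, hunit.mul_left_cancel (X_mul_cancel ?_)⟩
  rw [hf] at hFB
  linear_combination hroot - hFB

lemma eq_mul_specialize_of_kernel {B H₁ : R⟦X⟧} {D E H K : R[X]⟦X⟧}
    (hB : B = 1 + X * B ^ 4) (hBD : specialize B D = B ^ 2)
    (hH : H = E + X * C Polynomial.X * D * K)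
    (hK : (C Polynomial.X - 1) * K = C Polynomial.X * H - PowerSeries.map Polynomial.C H₁) :
    H₁ = B * specialize B E := by
  have hHB := congrArg (specialize B) hH
  have hKB := congrArg (specialize B) hK
  simp only [map_mul, map_sub, map_add, map_one, specialize_C, specialize_X, specialize_map_C,
    Polynomial.aeval_X, hBD] at hHB hKB
  linear_combination B * hHB + hKB - specialize B K * hB

end Series

/-! ### Coefficients of powers of the Fuss–Catalan series -/

section FussCatalan

variable {R : Type*} [CommRing R] [IsDomain R] [CharZero R] {B : R⟦X⟧} {q : ℕ}

lemma mul_coeff_pow_eq_mul_choose (hB : B = 1 + X * B ^ (q + 1)) (k r : ℕ) :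
    (((q + 1) * k + r : ℕ) : R) * coeff k (B ^ r) = r * ((q + 1) * k + r).choose k := by
  induction k generalizing r with
  | zero =>
    have hconst : constantCoeff B = 1 := by rw [hB]; simp
    simp [hconst]
  | succ k ihk =>
    induction r with
    | zero => simp [coeff_one]
    | succ r ihr =>
      set N := (q + 1) * k + (r + (q + 1)) with hN
      have hpow : B ^ (r + 1) = B ^ r + X * B ^ (r + (q + 1)) := by
        linear_combination B ^ r * hB
      have habsorb : ((N + 1 : ℕ) : R) * N.choose k = (N + 1).choose (k + 1) * (k + 1 : ℕ) :=
        mod_cast Nat.add_one_mul_choose_eq N k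
      have hpascal : ((N + 1).choose (k + 1) : R) = N.choose k + N.choose (k + 1) :=
        mod_cast Nat.choose_succ_succ N k
      have hNR : (N : R) = (q + 1) * k + (r + (q + 1)) := by push_cast [hN]; ring
      have hlow := ihk (r + (q + 1))
      rw [← hN] at hlow
      rw [show (q + 1) * (k + 1) + r = N by rw [hN]; ring] at ihr
      rw [show (q + 1) * (k + 1) + (r + 1) = N + 1 by rw [hN]; ring, hpow, map_add,
        coeff_succ_X_mul]
      have hN0 : (N : R) ≠ 0 := Nat.cast_ne_zero.2 (by omega)
      refine mul_left_cancel₀ hN0 ?_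
      push_cast at ihr hlow habsorb ⊢
      linear_combination (N + 1 : R) * (ihr + hlow) + (q + 1 : R) * habsorb
        - (N + 1 : R) * r * hpascal - (N + 1).choose (k + 1) * hNR

lemma mul_coeff_pow_succ_eq_mul_choose (hB : B = 1 + X * B ^ (q + 1)) (k r : ℕ) :
    ((q * k + r + 1 : ℕ) : R) * coeff k (B ^ (r + 1)) = (r + 1) * ((q + 1) * k + r).choose k := by
  set N := (q + 1) * k + r with hN
  have hraney := mul_coeff_pow_eq_mul_choose hB k (r + 1)
  rw [← add_assoc, ← hN] at hraney
  have habsorb : (N.choose k : R) * (N + 1 : ℕ) = (N + 1).choose k * (q * k + r + 1 : ℕ) := by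
    have := Nat.choose_mul_succ_eq N k
    rw [show N + 1 - k = q * k + r + 1 by rw [hN, add_one_mul]; omega] at this
    exact mod_cast this
  refine mul_left_cancel₀ (Nat.cast_ne_zero.2 N.succ_ne_zero : ((N + 1 : ℕ) : R) ≠ 0) ?_
  push_cast at hraney habsorb ⊢
  linear_combination (q * k + r + 1 : R) * hraney - (r + 1 : R) * habsorb

end FussCatalan

/-! ### Decomposition of intervals and of self-dual intervals -/

namespace BT

/-- The Tamari intervals. -/
def intervals : Set (BT × BT) := {p | tle p.1 p.2}

/-- The Tamari intervals whose upper tree is cut at a marked place `i` of its right spine, where `i`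
is between `0` and the length of the spine: the interval `(A, graft Y Z)` with `spine Y = i` is
encoded as `(A, Y, Z)`. -/
def cutIntervals : Set (BT × BT × BT) := {q | tle q.1 (graft q.2.1 q.2.2)}

/-- The upper trees of the self-dual intervals whose size has the remainder `r` modulo `2`. -/
def selfDualTops (r : ℕ) : Set BT := {T | IsSelfDualTop T ∧ T.size % 2 = r}

/-- The trees of `selfDualTops r` cut on the right spine within the first half of the nodes: the
tree `graft S R` is encoded as `(S, R)`. -/
def cutSelfDualTops (r : ℕ) : Set (BT × BT) :=
  {q | IsSelfDualTop (graft q.1 q.2) ∧ q.1.size ≤ q.2.size ∧ (q.1.size + q.2.size) % 2 = r}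

lemma size_eq_of_mem_cutIntervals {A Y Z : BT} (h : (A, Y, Z) ∈ cutIntervals) :
    A.size = Y.size + Z.size := by
  simpa using tle.size_eq h

lemma finiteFibers_intervals : FiniteFibers intervals fun p => p.1.size := by
  refine fun n => ((finite_setOf_size_le n).prod (finite_setOf_size_le n)).subset ?_
  rintro ⟨T, T'⟩ ⟨hle, rfl⟩
  exact ⟨by simp, hle.size_eq.ge⟩

lemma finiteFibers_cutIntervals : FiniteFibers cutIntervals fun q => q.1.size := by
  refine fun n => ((finite_setOf_size_le n).prod
    ((finite_setOf_size_le n).prod (finite_setOf_size_le n))).subset ?_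
  rintro ⟨A, Y, Z⟩ ⟨hle, rfl⟩
  have hsize := size_eq_of_mem_cutIntervals hle
  exact ⟨by simp, by simp [hsize], by simp [hsize]⟩

lemma finiteFibers_selfDualTops (r : ℕ) :
    FiniteFibers (selfDualTops r) fun T => T.size / 2 := by
  refine fun n => (finite_setOf_size_le (2 * n + 1)).subset ?_
  rintro T ⟨-, hn⟩
  simp only [Set.mem_ofPred_eq] at hn ⊢
  omega

lemma finiteFibers_cutSelfDualTops (r : ℕ) :
    FiniteFibers (cutSelfDualTops r) fun q => (q.1.size + q.2.size) / 2 := by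
  refine fun n => ((finite_setOf_size_le (2 * n + 1)).prod
    (finite_setOf_size_le (2 * n + 1))).subset ?_
  rintro ⟨S, R⟩ ⟨-, hn⟩
  simp only [Set.mem_prod, Set.mem_ofPred_eq] at hn ⊢
  omega

/-- The generating function of the Tamari intervals by size and, for the catalytic variable, by
length of the right spine of the upper tree. -/
noncomputable def intervalGF : ℤ[X]⟦X⟧ :=
  genFun intervals (fun p => p.1.size) fun p => Polynomial.X ^ spine p.2

/-- The generating function of `cutIntervals` by size and, for the catalytic variable, by the
place of the cut. -/
noncomputable def cutIntervalGF : ℤ[X]⟦X⟧ :=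
  genFun cutIntervals (fun q => q.1.size) fun q => Polynomial.X ^ spine q.2.1

/-- The generating function of `selfDualTops r` by half of the size and, for the catalytic
variable, by the number of nodes of the right spine in the first half of the nodes. -/
noncomputable def selfDualGF (r : ℕ) : ℤ[X]⟦X⟧ :=
  genFun (selfDualTops r) (fun T => T.size / 2) fun T => Polynomial.X ^ spineBelow (T.size / 2) T

/-- The generating function of `cutSelfDualTops r` by half of the size and, for the catalytic
variable, by the place of the cut. -/
noncomputable def cutSelfDualGF (r : ℕ) : ℤ[X]⟦X⟧ :=
  genFun (cutSelfDualTops r) (fun q => (q.1.size + q.2.size) / 2) fun q => Polynomial.X ^ spine q.1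

/-- The generating function of the Tamari intervals by size. -/
noncomputable def intervalSeries : ℤ⟦X⟧ :=
  genFun intervals (fun p => p.1.size) fun _ => 1

/-- The generating function of `selfDualTops r` by half of the size. -/
noncomputable def selfDualSeries (r : ℕ) : ℤ⟦X⟧ :=
  genFun (selfDualTops r) (fun T => T.size / 2) fun _ => 1

lemma bijOn_cutIntervals :
    Set.BijOn (fun q : BT × BT × BT => ((q.1, graft q.2.1 q.2.2), spine q.2.1)) cutIntervals
      {p | p.1 ∈ intervals ∧ p.2 ≤ spine p.1.2} := by
  refine ⟨?_, ?_, ?_⟩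
  · rintro ⟨A, Y, Z⟩ h
    exact ⟨h, by simp⟩
  · rintro ⟨A, Y, Z⟩ - ⟨A', Y', Z'⟩ - h
    simp only [Prod.mk.injEq] at h
    obtain ⟨rfl, rfl⟩ := graft_inj_of_spine_eq h.1.2 h.2
    rw [h.1.1]
  · rintro ⟨⟨A, T⟩, i⟩ ⟨hle, hi⟩
    obtain ⟨Y, Z, rfl, rfl⟩ := exists_graft_of_le_spine hi
    exact ⟨(A, Y, Z), hle, rfl⟩

lemma bijOn_cutSelfDualTops (r : ℕ) :
    Set.BijOn (fun q : BT × BT => (graft q.1 q.2, spine q.1)) (cutSelfDualTops r)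
      {p | p.1 ∈ selfDualTops r ∧ p.2 ≤ spineBelow (p.1.size / 2) p.1} := by
  have hhalf (S R : BT) :
      spine S ≤ spineBelow ((graft S R).size / 2) (graft S R) ↔ S.size ≤ R.size := by
    rw [← size_le_iff_spine_le_spineBelow, size_graft]
    omega
  refine ⟨?_, ?_, ?_⟩
  · rintro ⟨S, R⟩ ⟨hSR, hle, hr⟩
    exact ⟨⟨hSR, by rwa [size_graft]⟩, (hhalf S R).2 hle⟩
  · rintro ⟨S, R⟩ - ⟨S', R'⟩ - h
    simp only [Prod.mk.injEq] at h
    obtain ⟨rfl, rfl⟩ := graft_inj_of_spine_eq h.1 h.2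
    rfl
  · rintro ⟨T, i⟩ ⟨⟨hT, hr⟩, hi⟩
    obtain ⟨S, R, rfl, rfl⟩ := exists_graft_of_le_spine (hi.trans (spineBelow_le_spine _ _))
    exact ⟨(S, R), ⟨hT, (hhalf S R).1 hi, by rwa [← size_graft]⟩, rfl⟩

lemma sub_one_mul_cutIntervalGF :
    (C Polynomial.X - 1) * cutIntervalGF =
      C Polynomial.X * intervalGF - PowerSeries.map Polynomial.C intervalSeries := by
  have hmark := finiteFibers_intervals.sub_one_mul_genFun_mark (f := fun p => spine p.2)
    (Polynomial.X : ℤ[X])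
  rw [genFun_of_bijOn bijOn_cutIntervals] at hmark
  rw [intervalSeries, finiteFibers_intervals.map_genFun]
  simpa only [map_one, cutIntervalGF, intervalGF] using hmark

lemma sub_one_mul_cutSelfDualGF (r : ℕ) :
    (C Polynomial.X - 1) * cutSelfDualGF r =
      C Polynomial.X * selfDualGF r - PowerSeries.map Polynomial.C (selfDualSeries r) := by
  have hmark := (finiteFibers_selfDualTops r).sub_one_mul_genFun_mark
    (f := fun T => spineBelow (T.size / 2) T) (Polynomial.X : ℤ[X])
  rw [genFun_of_bijOn (bijOn_cutSelfDualTops r)] at hmark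
  rw [selfDualSeries, (finiteFibers_selfDualTops r).map_genFun]
  simpa only [map_one, cutSelfDualGF, selfDualGF, size_graft] using hmark

/-- The interval built from the cut interval `q.1 = (A, Y, Z)` and the interval `q.2`, as the left
and right parts of its lower tree. -/
def joinIntervals (q : (BT × BT × BT) × BT × BT) : BT × BT :=
  (node q.1.1 q.2.1, graft q.1.2.1 (node q.1.2.2 q.2.2))

lemma intervals_eq :
    intervals = {(leaf, leaf)} ∪ joinIntervals '' (cutIntervals ×ˢ intervals) := by
  ext ⟨T, T'⟩
  constructor
  · intro h
    cases T with
    | leaf => exact Or.inl (by simpa using (tle.size_eq h).symm)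
    | node A R =>
      obtain ⟨Y, Z, W, rfl, hA, hR⟩ := tle_node_iff.1 h
      exact Or.inr ⟨((A, Y, Z), R, W), ⟨hA, hR⟩, rfl⟩
  · rintro (h | ⟨⟨⟨A, Y, Z⟩, R, W⟩, ⟨hA, hR⟩, h⟩)
    · cases h
      exact tle.refl leaf
    · rw [← h]
      exact tle_node_iff.2 ⟨Y, Z, W, rfl, hA, hR⟩

lemma injOn_joinIntervals : Set.InjOn joinIntervals (cutIntervals ×ˢ intervals) := by
  rintro ⟨⟨A, Y, Z⟩, R, W⟩ ⟨hA, -⟩ ⟨⟨A', Y', Z'⟩, R', W'⟩ ⟨hA', -⟩ h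
  obtain ⟨⟨rfl, rfl⟩, hgraft⟩ : (A = A' ∧ R = R') ∧ graft Y (node Z W) = graft Y' (node Z' W') := by
    simpa [joinIntervals] using h
  have hsize := size_eq_of_mem_cutIntervals hA
  have hsize' := size_eq_of_mem_cutIntervals hA'
  obtain ⟨rfl, rfl, rfl⟩ := graft_node_unique (c := A.size) hgraft
    (by omega) (by omega) (by omega) (by omega)
  rfl

lemma intervalGF_eq :
    intervalGF = 1 + X * C Polynomial.X * cutIntervalGF * intervalGF := by
  have hdisj : Disjoint {(leaf, leaf)} (joinIntervals '' (cutIntervals ×ˢ intervals)) := by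
    rw [Set.disjoint_singleton_left]
    rintro ⟨q, -, hq⟩
    simp [joinIntervals] at hq
  have hjoin : genFun (joinIntervals '' (cutIntervals ×ˢ intervals)) (fun p => p.1.size)
      (fun p => (Polynomial.X : ℤ[X]) ^ spine p.2) =
      X * C Polynomial.X * cutIntervalGF * intervalGF := by
    rw [genFun_of_bijOn injOn_joinIntervals.bijOn_image, cutIntervalGF, intervalGF,
      ← finiteFibers_cutIntervals.genFun_prod_succ finiteFibers_intervals]
    refine genFun_congr (fun q _ => rfl) fun q _ => ?_
    simp only [joinIntervals, spine_graft, spine_node]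
    ring
  conv_lhs => rw [intervalGF, intervals_eq,
    genFun_union hdisj (intervals_eq ▸ finiteFibers_intervals), genFun_singleton, hjoin]
  simp

/-- The upper tree of a self-dual interval of odd size built from a cut interval
`q = (A, Y, Z)`. -/
def closeUp (q : BT × BT × BT) : BT := graft q.2.1 (node q.2.2 (mir q.1))

/-- The upper tree of a self-dual interval built by nesting the cut self-dual interval
`q.2 = (S, R)` inside the cut interval `q.1 = (A, Y, Z)`. -/
def nest (q : (BT × BT × BT) × BT × BT) : BT :=
  graft q.1.2.1 (node q.1.2.2 (graft q.2.1 (node q.2.2 (mir q.1.1))))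

lemma closeUp_mem {q : BT × BT × BT} (hq : q ∈ cutIntervals) : closeUp q ∈ selfDualTops 1 := by
  obtain ⟨A, Y, Z⟩ := q
  have hsize := size_eq_of_mem_cutIntervals hq
  refine ⟨(isSelfDualTop_graft_node_iff (by simpa using hsize)).2 ?_, ?_⟩
  · rw [mir_mir]
    exact hq
  · simp only [closeUp, size_graft, size_node, size_mir]
    omega

lemma nest_mem {q : (BT × BT × BT) × BT × BT} {r : ℕ}
    (hq : q ∈ cutIntervals ×ˢ cutSelfDualTops r) : nest q ∈ selfDualTops r := by
  obtain ⟨⟨A, Y, Z⟩, S, R⟩ := q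
  obtain ⟨hA, hSR, -, hr⟩ := hq
  have hsize := size_eq_of_mem_cutIntervals hA
  refine ⟨(isSelfDualTop_graft_graft_iff (by simpa using hsize)).2 ⟨?_, hSR⟩, ?_⟩
  · rw [mir_mir]
    exact hA
  · simp only [nest, size_graft, size_node, size_mir] at hr ⊢
    omega

lemma selfDualTops_cases {T : BT} {r : ℕ} (hT : T ∈ selfDualTops r) (hleaf : T ≠ leaf) :
    (r = 1 ∧ T ∈ closeUp '' cutIntervals) ∨
      T ∈ nest '' (cutIntervals ×ˢ cutSelfDualTops r) := by
  obtain ⟨hself, rfl⟩ := hT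
  obtain ⟨Y, Z, Q, rfl, hQ⟩ | ⟨Y, Z, S, R, Q, rfl, hQ, hSR, hle⟩ :=
    hself.exists_decomposition hleaf
  all_goals
    have hsize : Q.size = Y.size + Z.size := by simpa using hQ.size_eq
  · refine Or.inl ⟨?_, (mir Q, Y, Z), hQ, by simp [closeUp]⟩
    simp only [size_graft, size_node]
    omega
  · refine Or.inr ⟨((mir Q, Y, Z), S, R), ⟨hQ, hSR, hle, ?_⟩, by simp [nest]⟩
    simp only [size_graft, size_node]
    omega

lemma selfDualTops_zero_eq :
    selfDualTops 0 = {leaf} ∪ nest '' (cutIntervals ×ˢ cutSelfDualTops 0) := by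
  refine Set.Subset.antisymm (fun T hT => ?_) (Set.union_subset ?_ ?_)
  · by_cases hleaf : T = leaf
    · exact Or.inl hleaf
    · exact Or.inr ((selfDualTops_cases hT hleaf).resolve_left fun h => zero_ne_one h.1)
  · exact Set.singleton_subset_iff.2 ⟨tle.refl leaf, rfl⟩
  · exact Set.image_subset_iff.2 fun q => nest_mem

lemma selfDualTops_one_eq :
    selfDualTops 1 =
      closeUp '' cutIntervals ∪ nest '' (cutIntervals ×ˢ cutSelfDualTops 1) := by
  refine Set.Subset.antisymm (fun T hT => ?_) (Set.union_subset ?_ ?_)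
  · have hleaf : T ≠ leaf := by
      rintro rfl
      simp [selfDualTops] at hT
    exact (selfDualTops_cases hT hleaf).imp_left And.right
  · exact Set.image_subset_iff.2 fun q => closeUp_mem
  · exact Set.image_subset_iff.2 fun q => nest_mem

lemma closeUp_eq_graft (A Y Z : BT) : closeUp (A, Y, Z) = graft Y (node Z (mir A)) := rfl

lemma nest_eq_graft (A Y Z S R : BT) :
    nest ((A, Y, Z), S, R) = graft (graft Y (node Z S)) (node R (mir A)) := by
  simp [nest]

lemma injOn_closeUp : Set.InjOn closeUp cutIntervals := by
  rintro ⟨A, Y, Z⟩ hA ⟨A', Y', Z'⟩ hA' h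
  have hsize := size_eq_of_mem_cutIntervals hA
  have hsize' := size_eq_of_mem_cutIntervals hA'
  have htotal := congrArg size h
  simp only [closeUp, size_graft, size_node, size_mir] at htotal
  rw [closeUp_eq_graft, closeUp_eq_graft] at h
  obtain ⟨rfl, rfl, hmir⟩ := graft_node_unique (c := A.size) h
    (by omega) (by omega) (by omega) (by omega)
  rw [mir_injective hmir]

lemma injOn_nest (r : ℕ) : Set.InjOn nest (cutIntervals ×ˢ cutSelfDualTops r) := by
  rintro ⟨⟨A, Y, Z⟩, S, R⟩ ⟨hA, -, hle, -⟩ ⟨⟨A', Y', Z'⟩, S', R'⟩ ⟨hA', -, hle', -⟩ h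
  have hsize := size_eq_of_mem_cutIntervals hA
  have hsize' := size_eq_of_mem_cutIntervals hA'
  have htotal := congrArg size h
  simp only [nest, size_graft, size_node, size_mir] at htotal hle hle'
  rw [nest_eq_graft, nest_eq_graft] at h
  obtain ⟨hP, rfl, hmir⟩ := graft_node_unique (c := A.size + 1 + (S.size + R.size) / 2) h
    (by simp only [size_graft, size_node]; omega) (by simp only [size_graft, size_node]; omega)
    (by simp only [size_graft, size_node]; omega) (by simp only [size_graft, size_node]; omega)
  obtain rfl := mir_injective hmir
  obtain ⟨rfl, rfl, rfl⟩ := graft_node_unique (c := A.size) hP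
    (by omega) (by omega) (by omega) (by omega)
  rfl

lemma disjoint_closeUp_nest (r : ℕ) :
    Disjoint (closeUp '' cutIntervals) (nest '' (cutIntervals ×ˢ cutSelfDualTops r)) := by
  rw [Set.disjoint_left]
  rintro _ ⟨⟨A, Y, Z⟩, hA, rfl⟩ ⟨⟨⟨A', Y', Z'⟩, S, R⟩, ⟨hA', -, hle, -⟩, h⟩
  have hsize := size_eq_of_mem_cutIntervals hA
  have hsize' := size_eq_of_mem_cutIntervals hA'
  have htotal := congrArg size h
  simp only [nest, closeUp, size_graft, size_node, size_mir] at htotal hle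
  rw [nest_eq_graft, closeUp_eq_graft] at h
  obtain ⟨hP, rfl, hmir⟩ := graft_node_unique (c := A.size) h
    (by simp only [size_graft, size_node]; omega) (by simp only [size_graft, size_node]; omega)
    (by omega) (by omega)
  obtain rfl := mir_injective hmir
  have := congrArg size hP
  simp only [size_graft, size_node] at this
  omega

lemma genFun_image_nest (r : ℕ) :
    genFun (nest '' (cutIntervals ×ˢ cutSelfDualTops r)) (fun T => T.size / 2)
        (fun T => (Polynomial.X : ℤ[X]) ^ spineBelow (T.size / 2) T) =
      X * C Polynomial.X * cutIntervalGF * cutSelfDualGF r := by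
  rw [genFun_of_bijOn (injOn_nest r).bijOn_image, cutIntervalGF, cutSelfDualGF,
    ← finiteFibers_cutIntervals.genFun_prod_succ (finiteFibers_cutSelfDualTops r)]
  have hhalf {A Y Z S R : BT} (hA : (A, Y, Z) ∈ cutIntervals) :
      (nest ((A, Y, Z), S, R)).size / 2 = A.size + (S.size + R.size) / 2 + 1 := by
    have hsize := size_eq_of_mem_cutIntervals hA
    simp only [nest, size_graft, size_node, size_mir]
    omega
  refine genFun_congr ?_ ?_ <;> rintro ⟨⟨A, Y, Z⟩, S, R⟩ ⟨hA, -, hle, -⟩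
  · exact hhalf hA
  · have hsize := size_eq_of_mem_cutIntervals hA
    simp only at hle
    rw [hhalf hA, nest_eq_graft, spineBelow_graft_node]
    · simp only [spine_graft, spine_node]
      ring
    · simp only [size_graft, size_node]
      omega
    · simp only [size_graft, size_node]
      omega

lemma genFun_image_closeUp :
    genFun (closeUp '' cutIntervals) (fun T => T.size / 2)
      (fun T => (Polynomial.X : ℤ[X]) ^ spineBelow (T.size / 2) T) = cutIntervalGF := by
  rw [genFun_of_bijOn injOn_closeUp.bijOn_image, cutIntervalGF]
  have hhalf {A Y Z : BT} (hA : (A, Y, Z) ∈ cutIntervals) :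
      (closeUp (A, Y, Z)).size / 2 = A.size := by
    have hsize := size_eq_of_mem_cutIntervals hA
    simp only [closeUp, size_graft, size_node, size_mir]
    omega
  refine genFun_congr ?_ ?_ <;> rintro ⟨A, Y, Z⟩ hA
  · exact hhalf hA
  · have hsize := size_eq_of_mem_cutIntervals hA
    rw [hhalf hA, closeUp_eq_graft, spineBelow_graft_node (by omega) (by omega)]

lemma selfDualGF_zero_eq :
    selfDualGF 0 = 1 + X * C Polynomial.X * cutIntervalGF * cutSelfDualGF 0 := by
  have hdisj : Disjoint {leaf} (nest '' (cutIntervals ×ˢ cutSelfDualTops 0)) := by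
    rw [Set.disjoint_singleton_left]
    rintro ⟨q, -, hq⟩
    simpa [nest] using congrArg size hq
  rw [selfDualGF, selfDualTops_zero_eq,
    genFun_union hdisj (selfDualTops_zero_eq ▸ finiteFibers_selfDualTops 0), genFun_singleton,
    genFun_image_nest]
  simp

lemma selfDualGF_one_eq :
    selfDualGF 1 = cutIntervalGF + X * C Polynomial.X * cutIntervalGF * cutSelfDualGF 1 := by
  rw [selfDualGF, selfDualTops_one_eq, genFun_union (disjoint_closeUp_nest 1)
    (selfDualTops_one_eq ▸ finiteFibers_selfDualTops 1), genFun_image_closeUp, genFun_image_nest]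

lemma ncard_selfDual_intervals (n : ℕ) :
    {p : BT × BT | interval p n ∧ selfDual p}.ncard =
      {T : BT | IsSelfDualTop T ∧ T.size = n}.ncard := by
  have himage : {p : BT × BT | interval p n ∧ selfDual p} =
      (fun T => (mir T, T)) '' {T | IsSelfDualTop T ∧ T.size = n} := by
    ext ⟨T, T'⟩
    constructor
    · rintro ⟨⟨-, hn, hle⟩, h, -⟩
      obtain rfl : mir T' = T := h
      exact ⟨T', ⟨hle, hn⟩, rfl⟩
    · rintro ⟨_, ⟨hle, rfl⟩, h⟩
      cases h
      exact ⟨⟨size_mir T', rfl, hle⟩, rfl, mir_mir T'⟩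
  rw [himage, Set.ncard_image_of_injective _ fun T T' h => congrArg Prod.snd h]

lemma coeff_selfDualSeries {r : ℕ} (hr : r < 2) (k : ℕ) :
    coeff k (selfDualSeries r) =
      {p : BT × BT | interval p (2 * k + r) ∧ selfDual p}.ncard := by
  have hfiber : {T ∈ selfDualTops r | T.size / 2 = k} =
      {T | IsSelfDualTop T ∧ T.size = 2 * k + r} := by
    ext T
    simp only [selfDualTops, Set.mem_ofPred_eq, and_assoc]
    exact and_congr_right fun _ => by omega
  rw [selfDualSeries, (finiteFibers_selfDualTops r).coeff_genFun_one, hfiber,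
    ncard_selfDual_intervals]

lemma exists_series_counting_selfDual :
    ∃ B : ℤ⟦X⟧, B = 1 + X * B ^ 4 ∧ selfDualSeries 0 = B ∧ selfDualSeries 1 = B ^ 3 := by
  obtain ⟨B, hB, hcut⟩ := exists_catalytic_root intervalGF_eq sub_one_mul_cutIntervalGF
  refine ⟨B, hB, ?_, ?_⟩
  · simpa using
      eq_mul_specialize_of_kernel hB hcut selfDualGF_zero_eq (sub_one_mul_cutSelfDualGF 0)
  · rw [eq_mul_specialize_of_kernel hB hcut selfDualGF_one_eq (sub_one_mul_cutSelfDualGF 1), hcut,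
      ← pow_succ']

end BT

theorem count_self_dual_intervals (k : ℕ) :
    (1 ≤ k →
      (3 * k + 1) * Set.ncard {p : BT × BT | BT.interval p (2 * k) ∧ BT.selfDual p} =
        Nat.choose (4 * k) k) ∧
    (k + 1) * Set.ncard {p : BT × BT | BT.interval p (2 * k + 1) ∧ BT.selfDual p} =
      Nat.choose (4 * k + 2) k := by
  obtain ⟨B, hB, heven, hodd⟩ := BT.exists_series_counting_selfDual
  constructor
  · rintro -
    have hraney := mul_coeff_pow_succ_eq_mul_choose hB k 0
    rw [zero_add, pow_one, ← heven, BT.coeff_selfDualSeries zero_lt_two] at hraney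
    simp only [add_zero, Nat.cast_zero, zero_add, one_mul] at hraney
    exact_mod_cast hraney
  · have hraney := mul_coeff_pow_succ_eq_mul_choose hB k 2
    rw [← hodd, BT.coeff_selfDualSeries one_lt_two] at hraney
    push_cast at hraney
    refine Nat.eq_of_mul_eq_mul_left three_pos ?_
    zify
    linarith
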